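/- Let G be a (P_3 + P_1)-free graph with at least one edge. Then tree-α(G) = ibn(G), unless G is C_4-free but contains an induced C_5, in which case tree-α(G) = 2. -/

import Mathlib

open SimpleGraph
/-- The independence number of the subgraph of `G` induced by `s`:
the supremum of sizes of independent sets contained in `s`. -/
noncomputable def setIndepNum {V : Type*} (G : SimpleGraph V) (s : Set V) : ℕ :=
  sSup {n | ∃ t : Finset V, ↑t ⊆ s ∧ (∀ u ∈ t, ∀ v ∈ t, u ≠ v → ¬ G.Adj u v) ∧ t.card = n}

/-- A tree decomposition of a graph `G`. -/
structure TreeDecomp {V : Type*} (G : SimpleGraph V) where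
  ι : Type
  T : SimpleGraph ι
  tree : T.IsTree
  bag : ι → Set V
  bag_vert : ∀ v : V, ∃ i, v ∈ bag i
  bag_edge : ∀ u v : V, G.Adj u v → ∃ i, u ∈ bag i ∧ v ∈ bag i
  bag_conn : ∀ v : V, (T.induce {i | v ∈ bag i}).Connected

/-- The tree-independence number of `G`: the least `n` such that `G` has a tree
decomposition all of whose bags induce subgraphs with independence number at most `n`. -/
noncomputable def treeIndepNum {V : Type*} (G : SimpleGraph V) : ℕ :=
  sInf {n | ∃ D : TreeDecomp G, ∀ i, setIndepNum G (D.bag i) ≤ n}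

/-- `G` is `H`-free: no induced subgraph of `G` is isomorphic to `H`. -/
def IndFree {W V : Type*} (H : SimpleGraph W) (G : SimpleGraph V) : Prop :=
  IsEmpty (H ↪g G)

/-- The induced biclique number of `G`: the largest `s` such that `G` contains an induced
subgraph isomorphic to `K_{s,s}`. -/
noncomputable def ibn {V : Type*} (G : SimpleGraph V) : ℕ :=
  sSup {s | Nonempty (completeBipartiteGraph (Fin s) (Fin s) ↪g G)}

/-- `P_3 + P_1`: the disjoint union of a path on three vertices and an isolated vertex. -/
def P3plusP1 : SimpleGraph (Fin 3 ⊕ Fin 1) := pathGraph 3 ⊕g (⊥ : SimpleGraph (Fin 1))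

/-!
In a tree decomposition each vertex occupies a subtree, and adjacent vertices have intersecting
subtrees. By the Helly property of subtrees some bag contains a side of every biclique, which gives
`ibn G ≤ treeIndepNum G`; for an induced five-cycle some bag is not a clique.

For the upper bound, suppose first that there is a maximum independent set `I` of size at least
three, and let `U` be the set of vertices adjacent to all of `I`. As `G` is `(P_3 + P_1)`-free,
every vertex outside `U` is equal or adjacent to exactly one member of `I`, and `G` is the join of
`G[U]` and a disjoint union of cliques, one for each member of `I`. In the star with center bag `U`
and a leaf bag `U ∪ C` for each clique `C`, all bags have independence number at most
`max 1 α(G[U])`, and an independent subset of `U` forms a biclique with as many vertices of `I`.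

If there is no independent set of size three, a single bag gives `treeIndepNum G ≤ 2`. In the
absence of induced four- and five-cycles, the vertices are covered by two cliques whose
neighbourhoods in each other are nested, so that `G` is an interval graph and a path-shaped
decomposition into cliques exists.
-/

section Subtrees

variable {ι : Type*} {T : SimpleGraph ι} {S S' : Set ι}

theorem exists_isPath_support_subset (hS : (T.induce S).Preconnected) {u v : ι} (hu : u ∈ S)
    (hv : v ∈ S) : ∃ p : T.Walk u v, p.IsPath ∧ ∀ x ∈ p.support, x ∈ S := by
  obtain ⟨q, hq⟩ := (hS ⟨u, hu⟩ ⟨v, hv⟩).exists_isPath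
  refine ⟨q.map (Embedding.induce S).toHom, hq.map (Embedding.induce (G := T) S).injective, ?_⟩
  intro x hx
  have hx' : x ∈ q.support.map (Embedding.induce (G := T) S).toHom :=
    Walk.support_map (Embedding.induce S).toHom q ▸ hx
  obtain ⟨y, -, rfl⟩ := List.mem_map.1 hx'
  exact y.2

theorem preconnected_induce_inter (hT : T.IsAcyclic) (hS : (T.induce S).Preconnected)
    (hS' : (T.induce S').Preconnected) : (T.induce (S ∩ S')).Preconnected := by
  rintro ⟨u, hu, hu'⟩ ⟨v, hv, hv'⟩
  obtain ⟨p, hp, hpS⟩ := exists_isPath_support_subset hS hu hv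
  obtain ⟨q, hq, hqS'⟩ := exists_isPath_support_subset hS' hu' hv'
  obtain rfl : p = q := congrArg Subtype.val ((hT.subsingleton_path u v).elim ⟨p, hp⟩ ⟨q, hq⟩)
  exact (p.induce (S ∩ S') fun x hx => ⟨hpS x hx, hqS' x hx⟩).reachable

theorem reachable_deleteEdges_of_notMem_support {u v a b : ι} (p : T.Walk u v)
    (h : a ∉ p.support ∨ b ∉ p.support) : (T.deleteEdges {s(a, b)}).Reachable u v :=
  ⟨p.toDeleteEdge s(a, b) fun he =>
    h.elim (· (p.fst_mem_support_of_mem_edges he)) (· (p.snd_mem_support_of_mem_edges he))⟩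

theorem reachable_deleteEdges_of_preconnected_induce (hS : (T.induce S).Preconnected)
    {u v a b : ι} (hu : u ∈ S) (hv : v ∈ S) (hab : a ∉ S ∨ b ∉ S) :
    (T.deleteEdges {s(a, b)}).Reachable u v := by
  obtain ⟨p, -, hp⟩ := exists_isPath_support_subset hS hu hv
  exact reachable_deleteEdges_of_notMem_support p (hab.imp (mt (hp _)) (mt (hp _)))

theorem exists_adj_walk_avoiding {u v : ι} (p : T.Walk u v) (hp : ∃ x ∈ p.support, x ∈ S)
    (hv : v ∉ S) : ∃ a ∈ S, ∃ b, T.Adj a b ∧ ∃ q : T.Walk b v, ∀ x ∈ q.support, x ∉ S := by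
  induction p with
  | nil => simp [hv] at hp
  | @cons u w _ huw p ih =>
    by_cases htail : ∃ x ∈ p.support, x ∈ S
    · exact ih htail hv
    · push Not at htail
      obtain ⟨x, hx, hxS⟩ := hp
      rw [Walk.support_cons, List.mem_cons] at hx
      obtain rfl := hx.resolve_right fun hx => htail x hx hxS
      exact ⟨x, hxS, w, huw, p, htail⟩

/-- The gate is the last vertex `a` in `S` of a walk from `S` to `S'`: the edge `ab` by which the
walk leaves `S` is a bridge, and a connected set avoiding `a` would reconnect its two sides. -/
theorem exists_gate (hT : T.IsTree) (hS : (T.induce S).Preconnected)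
    (hS' : (T.induce S').Preconnected) (hne : S.Nonempty) (hne' : S'.Nonempty)
    (hdisj : Disjoint S S') :
    ∃ a ∈ S, ∀ C, (T.induce C).Preconnected → (C ∩ S).Nonempty → (C ∩ S').Nonempty → a ∈ C := by
  obtain ⟨s, hs⟩ := hne
  obtain ⟨s', hs'⟩ := hne'
  obtain ⟨w⟩ := hT.connected s s'
  obtain ⟨a, ha, b, hab, q, hq⟩ :=
    exists_adj_walk_avoiding w ⟨s, w.start_mem_support, hs⟩ (Set.disjoint_right.1 hdisj hs')
  refine ⟨a, ha, fun C hC ⟨c, hcC, hcS⟩ ⟨c', hcC', hcS'⟩ => ?_⟩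
  by_contra haC
  have hac := reachable_deleteEdges_of_preconnected_induce hS ha hcS
    (Or.inr (hq b q.start_mem_support) : a ∉ S ∨ b ∉ S)
  have hcc' := reachable_deleteEdges_of_preconnected_induce hC hcC hcC' (b := b) (Or.inl haC)
  have hc's' := reachable_deleteEdges_of_preconnected_induce hS' hcS' hs' (b := b)
    (Or.inl (Set.disjoint_left.1 hdisj ha))
  have hbs' := reachable_deleteEdges_of_notMem_support (a := a) (b := b) q
    (Or.inl (hq a · ha))
  exact isBridge_iff.1 (isAcyclic_iff_forall_adj_isBridge.1 hT.isAcyclic hab)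
    (((hac.trans hcc').trans hc's').trans hbs'.symm)

/-- The Helly property: if the common part of all sets but one missed the last set, the
gate between the two would lie in every set. -/
theorem preconnected_nonempty_biInter {α : Type*} (hT : T.IsTree) (A : Finset α) (F : α → Set ι)
    (hF : ∀ a ∈ A, (T.induce (F a)).Preconnected)
    (hpair : ∀ a ∈ A, ∀ b ∈ A, (F a ∩ F b).Nonempty) :
    (T.induce (⋂ a ∈ A, F a)).Preconnected ∧ (⋂ a ∈ A, F a).Nonempty := by
  classical
  induction A using Finset.induction_on with
  | empty =>
    rw [show ⋂ a ∈ (∅ : Finset α), F a = Set.univ by simp]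
    have := hT.connected.nonempty
    exact ⟨(induceUnivIso T).preconnected_iff.2 hT.connected.preconnected, Set.univ_nonempty⟩
  | insert a A _ ih =>
    simp only [Finset.forall_mem_insert] at hF hpair
    obtain ⟨hFa, hFA⟩ := hF
    obtain ⟨⟨haa, -⟩, hpairA⟩ := hpair
    obtain ⟨hconn, r, hr⟩ := ih hFA fun b hb => (hpairA b hb).2
    rw [Finset.set_biInter_insert]
    refine ⟨preconnected_induce_inter hT.isAcyclic hFa hconn, ?_⟩
    by_contra hempty
    obtain ⟨p, hpa, hp⟩ := exists_gate hT hFa hconn (haa.mono Set.inter_subset_left) ⟨r, hr⟩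
      (Set.disjoint_iff_inter_eq_empty.2 (Set.not_nonempty_iff_eq_empty.1 hempty))
    refine hempty ⟨p, hpa, Set.mem_iInter₂.2 fun b hb => hp (F b) (hFA b hb) ?_ ?_⟩
    · exact (hpairA b hb).1
    · exact ⟨r, Set.mem_iInter₂.1 hr b hb, hr⟩

end Subtrees

section IndependenceNumber

variable {V : Type*} {G : SimpleGraph V} {s : Set V} {n : ℕ}

theorem setIndepNum_le (h : ∀ t : Finset V, ↑t ⊆ s → G.IsIndepSet t → t.card ≤ n) :
    setIndepNum G s ≤ n := by
  refine csSup_le ⟨0, ∅, by simp⟩ ?_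
  rintro _ ⟨t, hts, ht, rfl⟩
  exact h t hts fun u hu v hv => ht u hu v hv

theorem card_le_setIndepNum [Finite V] {t : Finset V} (hts : ↑t ⊆ s) (ht : G.IsIndepSet t) :
    t.card ≤ setIndepNum G s := by
  have := Fintype.ofFinite V
  refine le_csSup ⟨Fintype.card V, ?_⟩ ⟨t, hts, fun u hu v hv => ht hu hv, rfl⟩
  rintro _ ⟨t, -, -, rfl⟩
  exact t.card_le_univ

theorem setIndepNum_le_one_of_isClique (hs : G.IsClique s) : setIndepNum G s ≤ 1 := by
  refine setIndepNum_le fun t hts ht => Finset.card_le_one.2 fun u hu v hv => ?_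
  by_contra huv
  exact ht hu hv huv (hs (hts hu) (hts hv) huv)

theorem isIndepSet_pair {u v : V} (huv : ¬ G.Adj u v) : G.IsIndepSet {u, v} :=
  Set.pairwise_pair.2 fun _ => ⟨huv, huv ∘ Adj.symm⟩

theorem isClique_of_setIndepNum_le_one [Finite V] (hs : setIndepNum G s ≤ 1) : G.IsClique s := by
  classical
  intro u hu v hv huv
  by_contra hadj
  have htwo : ({u, v} : Finset V).card ≤ setIndepNum G s :=
    card_le_setIndepNum (by simp [Set.insert_subset_iff, hu, hv])
      (by simpa using isIndepSet_pair hadj)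
  rw [Finset.card_pair huv] at htwo
  omega

theorem adj_or_adj_or_adj_of_indepSetFree_three (hG : G.IndepSetFree 3) {a b c : V} (hab : a ≠ b)
    (hac : a ≠ c) (hbc : b ≠ c) : G.Adj a b ∨ G.Adj a c ∨ G.Adj b c := by
  classical
  by_contra! h
  refine (cliqueFree_compl G).2 hG {a, b, c} (is3Clique_triple_iff.2 ?_)
  simpa [hab, hac, hbc] using h

end IndependenceNumber

section InducedSubgraphs

variable {V : Type*} {G : SimpleGraph V}

theorem nonempty_completeBipartiteGraph_embedding {α β : Type*} {f : α → V} {g : β → V}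
    (hf : f.Injective) (hg : g.Injective) (hff : ∀ i j, ¬ G.Adj (f i) (f j))
    (hgg : ∀ i j, ¬ G.Adj (g i) (g j)) (hfg : ∀ i j, G.Adj (f i) (g j)) :
    Nonempty (completeBipartiteGraph α β ↪g G) := by
  refine ⟨⟨⟨Sum.elim f g, hf.sumElim hg fun i j => (hfg i j).ne⟩, ?_⟩⟩
  rintro (i | i) (j | j) <;> simp [hff, hgg, hfg, (hfg _ _).symm]

/-- The four-cycle is the biclique with sides of size two. -/
def cycleGraphFourIso : cycleGraph 4 ≃g completeBipartiteGraph (Fin 2) (Fin 2) where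
  toFun := ![.inl 0, .inr 0, .inl 1, .inr 1]
  invFun := Sum.elim ![0, 2] ![1, 3]
  left_inv := by decide
  right_inv := by decide
  map_rel_iff' {i j} := by fin_cases i <;> fin_cases j <;> simp +decide

theorem IndFree.adj_or_adj_of_cycleGraph_four (hG : IndFree (cycleGraph 4) G) {a b c d : V}
    (hab : G.Adj a b) (hbc : G.Adj b c) (hcd : G.Adj c d) (hda : G.Adj d a) (hac : a ≠ c)
    (hbd : b ≠ d) : G.Adj a c ∨ G.Adj b d := by
  by_contra! h
  obtain ⟨e⟩ := nonempty_completeBipartiteGraph_embedding (G := G) (f := ![a, c]) (g := ![b, d])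
    (by simpa [Function.Injective, hac.symm]) (by simpa [Function.Injective, hbd.symm])
    (by simp [G.adj_comm c a, h]) (by simp [G.adj_comm d b, h])
    (by simp [hab, hbc.symm, hcd, hda.symm])
  exact hG.false (e.comp cycleGraphFourIso.toEmbedding)

theorem nonempty_cycleGraph_five_embedding {a b c d e : V} (hab : G.Adj a b) (hbc : G.Adj b c)
    (hcd : G.Adj c d) (hde : G.Adj d e) (hae : G.Adj a e) (hac : ¬ G.Adj a c)
    (had : ¬ G.Adj a d) (hbd : ¬ G.Adj b d) (hbe : ¬ G.Adj b e) (hce : ¬ G.Adj c e) :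
    Nonempty (cycleGraph 5 ↪g G) := by
  have hadj : ∀ i j, G.Adj (![a, b, c, d, e] i) (![a, b, c, d, e] j) ↔ (cycleGraph 5).Adj i j := by
    intro i j
    fin_cases i <;> fin_cases j <;> simp +decide [G.adj_comm, *]
  have htwins : ∀ i j : Fin 5, (∀ k, (cycleGraph 5).Adj i k ↔ (cycleGraph 5).Adj j k) → i = j := by
    decide
  refine ⟨⟨⟨![a, b, c, d, e], fun i j hij => htwins i j fun k => ?_⟩, hadj _ _⟩⟩
  rw [← hadj, ← hadj, hij]

theorem IndFree.adj_of_P3plusP1 (hG : IndFree P3plusP1 G) {a b c d : V} (hab : G.Adj a b)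
    (hbc : G.Adj b c) (hac : ¬ G.Adj a c) (hne : a ≠ c) :
    G.Adj a d ∨ G.Adj b d ∨ G.Adj c d := by
  by_contra! ⟨had, hbd, hcd⟩
  have hadj : ∀ i j, G.Adj (Sum.elim ![a, b, c] ![d] i) (Sum.elim ![a, b, c] ![d] j) ↔
      P3plusP1.Adj i j := by
    rintro (i | i) (j | j) <;> fin_cases i <;> fin_cases j <;>
      simp [P3plusP1, pathGraph_adj, G.adj_comm, *]
  refine hG.false ⟨⟨Sum.elim ![a, b, c] ![d], ?_⟩, hadj _ _⟩
  have hda : d ≠ a := by rintro rfl; exact hbd hab.symm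
  have hdb : d ≠ b := by rintro rfl; exact had hab
  have hdc : d ≠ c := by rintro rfl; exact hbd hbc
  refine Function.Injective.sumElim ?_ (Function.injective_of_subsingleton _) ?_
  · simp [Function.Injective, Fin.forall_fin_succ, hab.ne, hbc.ne, hab.ne', hbc.ne', hne, hne.symm]
  · simp [Fin.forall_fin_succ, hda.symm, hdb.symm, hdc.symm]

end InducedSubgraphs

section InducedBicliqueNumber

variable {V : Type*} [Finite V] {G : SimpleGraph V} {n : ℕ}

theorem bddAbove_induced_biclique :
    BddAbove {s | Nonempty (completeBipartiteGraph (Fin s) (Fin s) ↪g G)} := by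
  refine ⟨Nat.card V, ?_⟩
  rintro s ⟨e⟩
  simpa using Nat.card_le_card_of_injective _ (e.injective.comp Sum.inl_injective)

theorem le_ibn_iff :
    n ≤ ibn G ↔ Nonempty (completeBipartiteGraph (Fin n) (Fin n) ↪g G) := by
  refine ⟨fun h => ?_, fun h => le_csSup bddAbove_induced_biclique h⟩
  obtain ⟨e⟩ : Nonempty (completeBipartiteGraph (Fin (ibn G)) (Fin (ibn G)) ↪g G) :=
    Nat.sSup_mem ⟨0, nonempty_completeBipartiteGraph_embedding (f := finZeroElim)
      (g := finZeroElim) (Function.injective_of_subsingleton _)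
      (Function.injective_of_subsingleton _) (by simp) (by simp) (by simp)⟩
      bddAbove_induced_biclique
  have hinj := Fin.castLE_injective h
  exact nonempty_completeBipartiteGraph_embedding (f := e ∘ Sum.inl ∘ Fin.castLE h)
    (g := e ∘ Sum.inr ∘ Fin.castLE h) (e.injective.comp (Sum.inl_injective.comp hinj))
    (e.injective.comp (Sum.inr_injective.comp hinj)) (by simp) (by simp) (by simp)

theorem two_le_ibn_iff : 2 ≤ ibn G ↔ Nonempty (cycleGraph 4 ↪g G) :=
  le_ibn_iff.trans ⟨fun ⟨e⟩ => ⟨e.comp cycleGraphFourIso.toEmbedding⟩,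
    fun ⟨e⟩ => ⟨e.comp cycleGraphFourIso.symm.toEmbedding⟩⟩

theorem card_le_ibn {A B : Finset V} (hA : G.IsIndepSet A) (hB : G.IsIndepSet B)
    (hAB : ∀ a ∈ A, ∀ b ∈ B, G.Adj a b) (hcard : A.card = B.card) : A.card ≤ ibn G := by
  refine le_ibn_iff.2 (nonempty_completeBipartiteGraph_embedding
    (f := fun i => (A.equivFin.symm i : V)) (g := fun i => (B.equivFinOfCardEq hcard.symm).symm i)
    (Subtype.val_injective.comp (Equiv.injective _))
    (Subtype.val_injective.comp (Equiv.injective _)) ?_ ?_ ?_)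
  · exact fun i j h => hA (Subtype.prop _) (Subtype.prop _) h.ne h
  · exact fun i j h => hB (Subtype.prop _) (Subtype.prop _) h.ne h
  · exact fun i j => hAB _ (Subtype.prop _) _ (Subtype.prop _)

theorem one_le_ibn_of_adj {u v : V} (huv : G.Adj u v) : 1 ≤ ibn G :=
  card_le_ibn (A := {u}) (B := {v}) (by simp) (by simp) (by simpa using huv) rfl

theorem setIndepNum_commonNeighbors_le_ibn {I : Finset V} (hI : G.IsMaximumIndepSet I) :
    setIndepNum G {v | ∀ i ∈ I, G.Adj v i} ≤ ibn G := by
  refine setIndepNum_le fun t htU ht => ?_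
  obtain ⟨J, hJI, hJ⟩ := Finset.exists_subset_card_eq (hI.maximum t ht)
  exact card_le_ibn ht (hI.isIndepSet.mono hJI) (fun a ha b hb => htU ha b (hJI hb)) hJ.symm

end InducedBicliqueNumber

section TreeIndependenceNumber

variable {V : Type*} {G : SimpleGraph V}

theorem treeIndepNum_le (D : TreeDecomp G) {n : ℕ} (h : ∀ i, setIndepNum G (D.bag i) ≤ n) :
    treeIndepNum G ≤ n :=
  Nat.sInf_le ⟨D, h⟩

/-- The tree decomposition with a single bag. -/
def TreeDecomp.single (G : SimpleGraph V) : TreeDecomp G where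
  ι := Unit
  T := ⊥
  tree := IsTree.of_subsingleton
  bag _ := Set.univ
  bag_vert _ := ⟨(), trivial⟩
  bag_edge _ _ _ := ⟨(), trivial, trivial⟩
  bag_conn _ := (induceUnivIso _).connected_iff.2 IsTree.of_subsingleton.connected

theorem treeIndepNum_le_setIndepNum_univ (G : SimpleGraph V) :
    treeIndepNum G ≤ setIndepNum G Set.univ :=
  treeIndepNum_le (TreeDecomp.single G) fun _ => le_refl (setIndepNum G Set.univ)

theorem exists_treeDecomp_setIndepNum_le (G : SimpleGraph V) :
    ∃ D : TreeDecomp G, ∀ i, setIndepNum G (D.bag i) ≤ treeIndepNum G :=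
  Nat.sInf_mem (s := {n | ∃ D : TreeDecomp G, ∀ i, setIndepNum G (D.bag i) ≤ n})
    ⟨setIndepNum G Set.univ, TreeDecomp.single G, fun _ => le_rfl⟩

end TreeIndependenceNumber

section LowerBounds

variable {V : Type*} {G : SimpleGraph V}

/-- If the subtrees of the vertices of `A` do not have a common node, then two of them are disjoint,
and the subtrees of the vertices of `B`, which meet both, pass through the gate between them. -/
theorem TreeDecomp.exists_bag_of_biclique (D : TreeDecomp G) {A B : Finset V}
    (hAB : ∀ a ∈ A, ∀ b ∈ B, G.Adj a b) : ∃ i, ↑A ⊆ D.bag i ∨ ↑B ⊆ D.bag i := by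
  by_cases hmeet : ∀ a ∈ A, ∀ a' ∈ A, ({i | a ∈ D.bag i} ∩ {i | a' ∈ D.bag i}).Nonempty
  · obtain ⟨-, i, hi⟩ := preconnected_nonempty_biInter D.tree A (fun a => {i | a ∈ D.bag i})
      (fun a _ => (D.bag_conn a).preconnected) hmeet
    exact ⟨i, Or.inl (Set.mem_iInter₂.1 hi)⟩
  · push Not at hmeet
    obtain ⟨a, ha, a', ha', hempty⟩ := hmeet
    obtain ⟨i, -, hi⟩ := exists_gate D.tree (D.bag_conn a).preconnected
      (D.bag_conn a').preconnected (D.bag_vert a) (D.bag_vert a')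
      (Set.disjoint_iff_inter_eq_empty.2 hempty)
    refine ⟨i, Or.inr fun b hb => hi _ (D.bag_conn b).preconnected ?_ ?_⟩
    · exact D.bag_edge b a (hAB a ha b hb).symm
    · exact D.bag_edge b a' (hAB a' ha' b hb).symm

theorem ibn_le_treeIndepNum [Finite V] (G : SimpleGraph V) : ibn G ≤ treeIndepNum G := by
  obtain ⟨D, hD⟩ := exists_treeDecomp_setIndepNum_le G
  obtain ⟨e⟩ := le_ibn_iff.1 (le_refl (ibn G))
  let A : Finset V := Finset.univ.map (Function.Embedding.inl.trans e.toEmbedding)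
  let B : Finset V := Finset.univ.map (Function.Embedding.inr.trans e.toEmbedding)
  have hA : G.IsIndepSet A := by simp [A, IsIndepSet, Set.Pairwise]
  have hB : G.IsIndepSet B := by simp [B, IsIndepSet, Set.Pairwise]
  obtain ⟨i, hi | hi⟩ := D.exists_bag_of_biclique (A := A) (B := B) (by simp [A, B])
  · simpa [A] using (card_le_setIndepNum hi hA).trans (hD i)
  · simpa [B] using (card_le_setIndepNum hi hB).trans (hD i)

/-- If all bags were cliques, the gate between the subtrees of the vertices `0` and `2` of the cycle
would lie in the subtree of `1` and in the union of the subtrees of `3` and `4`. -/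
theorem TreeDecomp.exists_not_isClique_of_cycleGraph_five (D : TreeDecomp G)
    (e : cycleGraph 5 ↪g G) : ∃ i, ¬ G.IsClique (D.bag i) := by
  by_contra! hclique
  have hmeet : ∀ j k, (cycleGraph 5).Adj j k →
      ({i | e j ∈ D.bag i} ∩ {i | e k ∈ D.bag i}).Nonempty := fun j k hjk =>
    D.bag_edge _ _ (e.map_adj_iff.2 hjk)
  have hdisj : ∀ j k, j ≠ k → ¬ (cycleGraph 5).Adj j k →
      Disjoint {i | e j ∈ D.bag i} {i | e k ∈ D.bag i} := fun j k hjk hn =>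
    Set.disjoint_left.2 fun i hj hk => hn (e.map_adj_iff.1 (hclique i hj hk (e.injective.ne hjk)))
  have hconn : ∀ j, (D.T.induce {i | e j ∈ D.bag i}).Preconnected := fun j =>
    (D.bag_conn (e j)).preconnected
  have hconn34 : (D.T.induce ({i | e 3 ∈ D.bag i} ∪ {i | e 4 ∈ D.bag i})).Preconnected :=
    (induce_union_connected (hconn 3) (hconn 4) (hmeet 3 4 (by decide))).preconnected
  obtain ⟨i, -, hi⟩ := exists_gate D.tree (hconn 0) (hconn 2) (D.bag_vert (e 0))
    (D.bag_vert (e 2)) (hdisj 0 2 (by decide) (by decide))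
  have hi1 := hi _ (hconn 1) (hmeet 1 0 (by decide)) (hmeet 1 2 (by decide))
  have hi34 := hi _ hconn34
    ((hmeet 4 0 (by decide)).mono (Set.inter_subset_inter_left _ Set.subset_union_right))
    ((hmeet 3 2 (by decide)).mono (Set.inter_subset_inter_left _ Set.subset_union_left))
  rcases hi34 with hi3 | hi4
  · exact Set.disjoint_left.1 (hdisj 1 3 (by decide) (by decide)) hi1 hi3
  · exact Set.disjoint_left.1 (hdisj 1 4 (by decide) (by decide)) hi1 hi4

theorem two_le_treeIndepNum_of_cycleGraph_five [Finite V] (e : cycleGraph 5 ↪g G) :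
    2 ≤ treeIndepNum G := by
  obtain ⟨D, hD⟩ := exists_treeDecomp_setIndepNum_le G
  obtain ⟨i, hi⟩ := D.exists_not_isClique_of_cycleGraph_five e
  by_contra! hlt
  exact hi (isClique_of_setIndepNum_le_one ((hD i).trans (Nat.le_of_lt_succ hlt)))

end LowerBounds

section Decompositions

variable {V : Type*} {G : SimpleGraph V}

/-- The star-shaped tree decomposition with center bag `U` and one leaf bag for each label `k`,
consisting of `U` and the vertices labelled `k`. -/
def TreeDecomp.star {κ : Type} (U : Set V) (r : V → κ)
    (hr : ∀ u ∉ U, ∀ v ∉ U, G.Adj u v → r u = r v) : TreeDecomp G where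
  ι := Option κ
  T := starGraph none
  tree := isTree_starGraph none
  bag o := U ∪ {v | v ∉ U ∧ some (r v) = o}
  bag_vert v := ⟨some (r v), by simp [em]⟩
  bag_edge u v huv := by
    by_cases hu : u ∈ U
    · exact ⟨some (r v), by simp [hu, em]⟩
    by_cases hv : v ∈ U
    · exact ⟨some (r u), by simp [hu, hv]⟩
    · exact ⟨some (r u), by simp [hu, hv, hr u hu v hv huv]⟩
  bag_conn v := by
    by_cases hv : v ∈ U
    · rw [show {o | v ∈ U ∪ {v | v ∉ U ∧ some (r v) = o}} = Set.univ by simp [hv]]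
      exact (induceUnivIso _).connected_iff.2 (connected_starGraph none)
    · rw [show {o | v ∈ U ∪ {v | v ∉ U ∧ some (r v) = o}} = {some (r v)} by ext; simp [hv, eq_comm]]
      exact IsTree.of_subsingleton.connected

theorem treeIndepNum_le_max_one_setIndepNum {κ : Type} [Finite V] {U : Set V} (r : V → κ)
    (hr : ∀ u ∉ U, ∀ v, u ≠ v → (G.Adj u v ↔ v ∈ U ∨ r u = r v)) :
    treeIndepNum G ≤ max 1 (setIndepNum G U) := by
  refine treeIndepNum_le (TreeDecomp.star U r fun u hu v hv huv =>
    ((hr u hu v huv.ne).1 huv).resolve_left hv) fun o => setIndepNum_le fun t hto ht => ?_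
  by_cases htU : ↑t ⊆ U
  · exact le_max_of_le_right (card_le_setIndepNum htU ht)
  obtain ⟨w, hwt, hwU⟩ := Set.not_subset.1 htU
  have hwo : some (r w) = o := ((hto hwt).resolve_left hwU).2
  suffices h : t ⊆ {w} from le_max_of_le_left (Finset.card_le_card h)
  intro v hvt
  rw [Finset.mem_singleton]
  by_contra hvw
  refine ht hwt hvt (Ne.symm hvw) ((hr w hwU v (Ne.symm hvw)).2 ?_)
  exact (hto hvt).imp_right fun hv => Option.some_injective _ (hwo.trans hv.2.symm)

theorem isAcyclic_hasse {α : Type*} [LinearOrder α] : (hasse α).IsAcyclic := by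
  have hbridge : ∀ {a b : α}, a ⋖ b → ¬ ((hasse α).deleteEdges {s(a, b)}).Reachable a b := by
    rintro a b hab ⟨w⟩
    have hle : ∀ {x y : α}, ((hasse α).deleteEdges {s(a, b)}).Walk x y → x ≤ a → y ≤ a := by
      intro x y w hx
      induction w with
      | nil => exact hx
      | @cons x y _ hxy _ ih =>
        refine ih ?_
        simp only [deleteEdges_adj, hasse_adj, Set.mem_singleton_iff] at hxy
        obtain ⟨hxy | hyx, hne⟩ := hxy
        · by_contra! hya
          obtain rfl : x = a := by_contra fun hxa => hxy.2 (lt_of_le_of_ne hx hxa) hya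
          exact hne (by rw [hxy.unique_right hab])
        · exact hyx.le.trans hx
    exact (hle w le_rfl).not_gt hab.lt
  rw [isAcyclic_iff_forall_adj_isBridge]
  rintro a b (hab | hba)
  · exact isBridge_iff.2 (hbridge hab)
  · rw [Sym2.eq_swap]
    exact isBridge_iff.2 (hbridge hba)

theorem connected_induce_hasse {α : Type*} [LinearOrder α] [SuccOrder α] [IsSuccArchimedean α]
    {S : Set α} (hS : S.OrdConnected) (hne : S.Nonempty) : ((hasse α).induce S).Connected := by
  have := hne.to_subtype
  refine ⟨(hasse_preconnected_of_succ S).mono fun x y hxy => ?_⟩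
  have hcov : ∀ {x y : S}, x ⋖ y → (x : α) ⋖ y :=
    (Set.OrdConnected.apply_covBy_apply_iff (OrderEmbedding.subtype (· ∈ S))
      (by simpa using hS)).2
  exact hxy.imp hcov hcov

/-- The path-shaped tree decomposition given by an interval model: each vertex `v` has an interval
`S v` of nodes, and adjacent vertices have intersecting intervals. -/
def TreeDecomp.ofOrdConnected {α : Type} [LinearOrder α] [SuccOrder α] [IsSuccArchimedean α]
    [Nonempty α] (S : V → Set α) (hS : ∀ v, (S v).OrdConnected)
    (hne : ∀ v, (S v).Nonempty) (hadj : ∀ u v, G.Adj u v → (S u ∩ S v).Nonempty) :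
    TreeDecomp G where
  ι := α
  T := hasse α
  tree := ⟨⟨hasse_preconnected_of_succ α⟩, isAcyclic_hasse⟩
  bag t := {v | t ∈ S v}
  bag_vert := hne
  bag_edge := hadj
  bag_conn v := connected_induce_hasse (hS v) (hne v)

theorem treeIndepNum_le_one_of_adj_iff_le {A : Set V} (hA : G.IsClique A) (hB : G.IsClique Aᶜ)
    (f g : V → ℕ) (hfg : ∀ a ∈ A, ∀ b ∉ A, (G.Adj a b ↔ g b ≤ f a)) : treeIndepNum G ≤ 1 := by
  classical
  let S : V → Set ℕ := fun v => if v ∈ A then Set.Iic (f v) else Set.Ici (g v)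
  have hSA : ∀ {a}, a ∈ A → S a = Set.Iic (f a) := fun ha => if_pos ha
  have hSB : ∀ {b}, b ∉ A → S b = Set.Ici (g b) := fun hb => if_neg hb
  have hS : ∀ v, (S v).OrdConnected ∧ (S v).Nonempty := by
    intro v
    by_cases hv : v ∈ A
    · rw [hSA hv]
      exact ⟨Set.ordConnected_Iic, Set.nonempty_Iic⟩
    · rw [hSB hv]
      exact ⟨Set.ordConnected_Ici, Set.nonempty_Ici⟩
  have hadj : ∀ u v, G.Adj u v → (S u ∩ S v).Nonempty := by
    intro u v huv
    by_cases hu : u ∈ A <;> by_cases hv : v ∈ A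
    · rw [hSA hu, hSA hv, Set.Iic_inter_Iic]
      exact Set.nonempty_Iic
    · rw [hSA hu, hSB hv, Set.inter_comm, Set.Ici_inter_Iic]
      exact Set.nonempty_Icc.2 ((hfg u hu v hv).1 huv)
    · rw [hSB hu, hSA hv, Set.Ici_inter_Iic]
      exact Set.nonempty_Icc.2 ((hfg v hv u hu).1 huv.symm)
    · rw [hSB hu, hSB hv, Set.Ici_inter_Ici]
      exact Set.nonempty_Ici
  refine treeIndepNum_le (TreeDecomp.ofOrdConnected S (fun v => (hS v).1) (fun v => (hS v).2) hadj)
    fun t => setIndepNum_le_one_of_isClique fun u (hut : t ∈ S u) v (hvt : t ∈ S v) huv => ?_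
  by_cases hu : u ∈ A <;> by_cases hv : v ∈ A
  · exact hA hu hv huv
  · rw [hSA hu] at hut
    rw [hSB hv] at hvt
    exact (hfg u hu v hv).2 (le_trans hvt hut)
  · rw [hSB hu] at hut
    rw [hSA hv] at hvt
    exact ((hfg v hv u hu).2 (le_trans hut hvt)).symm
  · exact hB hu hv huv

theorem exists_adj_iff_le_of_nested [Finite V] {A : Set V}
    (hnest : ∀ a ∈ A, ∀ a' ∈ A,
      G.neighborSet a \ A ⊆ G.neighborSet a' ∨ G.neighborSet a' \ A ⊆ G.neighborSet a) :
    ∃ f g : V → ℕ, ∀ a ∈ A, ∀ b ∉ A, (G.Adj a b ↔ g b ≤ f a) := by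
  classical
  have := Fintype.ofFinite V
  let f : V → ℕ := fun a => (G.neighborSet a \ A).ncard
  let g : V → ℕ := fun b => {a | a ∈ A ∧ ¬ G.Adj a b}.toFinset.sup (f · + 1)
  refine ⟨f, g, fun a ha b hb => ⟨fun hab => Finset.sup_le fun a' ha' => ?_, fun hle => ?_⟩⟩
  · obtain ⟨ha', hab'⟩ : a' ∈ A ∧ ¬ G.Adj a' b := by simpa using ha'
    have hsub : G.neighborSet a' \ A ⊆ G.neighborSet a :=
      (hnest a ha a' ha').resolve_left fun h => hab' (h ⟨hab, hb⟩)
    exact Set.ncard_lt_ncard ⟨fun v hv => ⟨hsub hv, hv.2⟩, fun h => hab' (h ⟨hab, hb⟩).1⟩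
  · by_contra hab
    have hlt : f a + 1 ≤ g b := Finset.le_sup (f := (f · + 1)) (by simp [ha, hab])
    omega

end Decompositions

section IndepSetFreeThree

variable {V : Type*} {G : SimpleGraph V}

theorem treeIndepNum_le_two_of_indepSetFree_three (hG : G.IndepSetFree 3) : treeIndepNum G ≤ 2 := by
  refine (treeIndepNum_le_setIndepNum_univ G).trans (setIndepNum_le fun t _ ht => ?_)
  by_contra! hlt
  obtain ⟨s, hst, hs⟩ := Finset.exists_subset_card_eq (Nat.succ_le_of_lt hlt)
  exact hG s ⟨ht.mono hst, hs⟩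

theorem isClique_neighborSet_compl (hG : G.IndepSetFree 3) (x : V) :
    G.IsClique (Gᶜ.neighborSet x) := by
  intro a ha b hb hab
  rcases adj_or_adj_or_adj_of_indepSetFree_three hG ha.1 hb.1 hab with h | h | h
  exacts [absurd h ha.2, absurd h hb.2, h]

/-- Let `A` be the set of non-neighbours of a vertex `x` with as many non-neighbours as possible.
If `u, v ∉ A` are distinct and nonadjacent, then every vertex of `A` is adjacent to exactly one of
them, and the choice of `x` gives `a, b ∈ A` with `a ~ u` and `b ~ v`: an induced five-cycle
`x u a b v`. -/
theorem exists_isClique_isClique_compl [Finite V] (hG : G.IndepSetFree 3)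
    (h4 : IndFree (cycleGraph 4) G) (h5 : IndFree (cycleGraph 5) G) :
    ∃ A : Set V, G.IsClique A ∧ G.IsClique Aᶜ := by
  cases isEmpty_or_nonempty V
  · exact ⟨∅, isClique_empty, Set.subsingleton_of_subsingleton.pairwise _⟩
  obtain ⟨x, hx⟩ := Finite.exists_max fun x => (Gᶜ.neighborSet x).ncard
  refine ⟨Gᶜ.neighborSet x, isClique_neighborSet_compl hG x, fun u hu v hv huv => ?_⟩
  by_contra hnuv
  have hadj_x : ∀ {u v}, u ∉ Gᶜ.neighborSet x → v ∉ Gᶜ.neighborSet x → u ≠ v → ¬ G.Adj u v →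
      G.Adj x u := by
    intro u v hu hv huv hnuv
    by_contra hxu
    obtain rfl : x = u := by_contra fun hne => hu ⟨hne, hxu⟩
    exact hv ⟨huv, hnuv⟩
  have hxu : G.Adj x u := hadj_x hu hv huv hnuv
  have hxv : G.Adj x v := hadj_x hv hu huv.symm (hnuv ∘ Adj.symm)
  have hnot_both : ∀ a ∈ Gᶜ.neighborSet x, ¬ (G.Adj u a ∧ G.Adj a v) := fun a ha ⟨hua, hav⟩ =>
    (h4.adj_or_adj_of_cycleGraph_four hxu hua hav hxv.symm ha.1 huv).elim ha.2 hnuv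
  have hexists : ∀ {u v}, u ∉ Gᶜ.neighborSet x → v ∉ Gᶜ.neighborSet x → u ≠ v → ¬ G.Adj u v →
      ∃ a ∈ Gᶜ.neighborSet x, G.Adj u a := by
    intro u v hu hv huv hnuv
    by_contra! hnone
    exact (hx u).not_gt (Set.ncard_lt_ncard
      ⟨fun a ha => ⟨fun h => hu (h ▸ ha), hnone a ha⟩, fun h => hv (h ⟨huv, hnuv⟩)⟩)
  obtain ⟨a, ha, hua⟩ := hexists hu hv huv hnuv
  obtain ⟨b, hb, hvb⟩ := hexists hv hu huv.symm (hnuv ∘ Adj.symm)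
  have hnav : ¬ G.Adj a v := fun hav => hnot_both a ha ⟨hua, hav⟩
  have hnub : ¬ G.Adj u b := fun hub => hnot_both b hb ⟨hub, hvb.symm⟩
  have hab : G.Adj a b :=
    isClique_neighborSet_compl hG x ha hb fun h => hnub (h ▸ hua)
  exact not_nonempty_iff.2 h5
    (nonempty_cycleGraph_five_embedding hxu hua hab hvb.symm hxv ha.2 hb.2 hnub hnuv hnav)

theorem IndFree.neighborSet_diff_subset_or (h4 : IndFree (cycleGraph 4) G) {A : Set V}
    (hA : G.IsClique A) (hB : G.IsClique Aᶜ) {a a' : V} (ha : a ∈ A) (ha' : a' ∈ A) :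
    G.neighborSet a \ A ⊆ G.neighborSet a' ∨ G.neighborSet a' \ A ⊆ G.neighborSet a := by
  by_contra! ⟨hsub, hsub'⟩
  obtain ⟨b, ⟨hab, hb⟩, hna'b⟩ := Set.not_subset.1 hsub
  obtain ⟨b', ⟨ha'b', hb'⟩, hnab'⟩ := Set.not_subset.1 hsub'
  rw [mem_neighborSet] at hab ha'b' hna'b hnab'
  have hbb' : G.Adj b b' := hB hb hb' fun h => hnab' (h ▸ hab)
  have haa' : G.Adj a' a := hA ha' ha fun h => hnab' (h ▸ ha'b')
  rcases h4.adj_or_adj_of_cycleGraph_four hab hbb' ha'b'.symm haa' (fun h => hb' (h ▸ ha))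
    (fun h => hb (h ▸ ha')) with h | h
  exacts [hnab' h, hna'b h.symm]

theorem treeIndepNum_le_one_of_indepSetFree_three [Finite V] (hG : G.IndepSetFree 3)
    (h4 : IndFree (cycleGraph 4) G) (h5 : IndFree (cycleGraph 5) G) : treeIndepNum G ≤ 1 := by
  obtain ⟨A, hA, hB⟩ := exists_isClique_isClique_compl hG h4 h5
  obtain ⟨f, g, hfg⟩ := exists_adj_iff_le_of_nested fun a ha a' ha' =>
    h4.neighborSet_diff_subset_or hA hB ha ha'
  exact treeIndepNum_le_one_of_adj_iff_le hA hB f g hfg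

end IndepSetFreeThree

section UniquelyDominates

variable {V : Type*} {G : SimpleGraph V} {I : Set V} {i j v : V}

/-- The vertex `i` is the only member of `I` that is equal or adjacent to `v`. For a maximum
independent set `I` with at least three vertices, the vertices dominated by the same `i` in this way
form one of the disjoint cliques of the star decomposition. -/
def UniquelyDominates (G : SimpleGraph V) (I : Set V) (i v : V) : Prop :=
  i ∈ I ∧ ∀ k ∈ I, v = k ∨ G.Adj v k ↔ k = i

theorem UniquelyDominates.eq_of_adj (h : UniquelyDominates G I i v) (hj : j ∈ I)
    (hvj : G.Adj v j) : j = i :=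
  (h.2 j hj).1 (Or.inr hvj)

theorem IndFree.forall_adj_of_adj_of_adj (hG : IndFree P3plusP1 G) (hI : G.IsIndepSet I)
    (hi : i ∈ I) (hj : j ∈ I) (hij : i ≠ j) (hvi : G.Adj v i) (hvj : G.Adj v j) :
    ∀ k ∈ I, G.Adj v k := by
  intro k hk
  rcases hG.adj_of_P3plusP1 hvi.symm hvj (hI hi hj hij) hij with hik | hvk | hjk
  exacts [absurd hik (hI hi hk hik.ne), hvk, absurd hjk (hI hj hk hjk.ne)]

theorem exists_mem_eq_or_adj_of_maximal (hI : Maximal G.IsIndepSet I) (v : V) :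
    ∃ i ∈ I, v = i ∨ G.Adj v i := by
  by_contra! h
  have hins : G.IsIndepSet (insert v I) := hI.prop.insert fun i hi _ =>
    ⟨(h i hi).2, (h i hi).2 ∘ Adj.symm⟩
  exact (h v (hI.le_of_ge hins (Set.subset_insert v I) (Set.mem_insert v I))).1 rfl

theorem IndFree.forall_adj_or_exists_uniquelyDominates (hG : IndFree P3plusP1 G)
    (hI : Maximal G.IsIndepSet I) (v : V) :
    (∀ i ∈ I, G.Adj v i) ∨ ∃ i, UniquelyDominates G I i v := by
  obtain ⟨i, hi, hvi⟩ := exists_mem_eq_or_adj_of_maximal hI v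
  refine or_iff_not_imp_left.2 fun hv => ⟨i, hi, fun k hk => ⟨?_, fun h => h ▸ hvi⟩⟩
  intro hvk
  by_contra hki
  rcases hvi with rfl | hvi <;> rcases hvk with rfl | hvk
  · exact hki rfl
  · exact hI.prop hi hk hvk.ne hvk
  · exact hI.prop hk hi hvi.ne hvi
  · exact hv (hG.forall_adj_of_adj_of_adj hI.prop hk hi hki hvk hvi)

theorem exists_mem_ne_ne_of_two_lt_encard (hI : 2 < I.encard) (i j : V) :
    ∃ k ∈ I, k ≠ i ∧ k ≠ j := by
  have hpair : ({i, j} : Set V).encard ≤ 2 := by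
    simpa [one_add_one_eq_two] using Set.encard_insert_le {j} i
  obtain ⟨k, hk, hkij⟩ : ∃ k ∈ I, k ∉ ({i, j} : Set V) :=
    Set.not_subset.1 fun hsub => ((Set.encard_le_encard hsub).trans hpair).not_gt hI
  exact ⟨k, hk, by simpa using hkij⟩

theorem IndFree.adj_of_uniquelyDominates (hG : IndFree P3plusP1 G) (hI : G.IsIndepSet I)
    (hI3 : 2 < I.encard) (hv : UniquelyDominates G I i v) {w : V} (hw : ∀ k ∈ I, G.Adj w k) :
    G.Adj w v := by
  obtain ⟨j, hj, hji, -⟩ := exists_mem_ne_ne_of_two_lt_encard hI3 i i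
  obtain ⟨k, hk, hki, hkj⟩ := exists_mem_ne_ne_of_two_lt_encard hI3 i j
  rcases hG.adj_of_P3plusP1 (hw j hj).symm (hw k hk) (hI hj hk hkj.symm) hkj.symm with h | h | h
  exacts [absurd (hv.eq_of_adj hj h.symm) hji, h, absurd (hv.eq_of_adj hk h.symm) hki]

theorem IndFree.adj_iff_of_uniquelyDominates (hG : IndFree P3plusP1 G) (hI : G.IsIndepSet I)
    (hI3 : 2 < I.encard) {u : V} (hu : UniquelyDominates G I i u)
    (hv : UniquelyDominates G I j v) (huv : u ≠ v) : G.Adj u v ↔ i = j := by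
  obtain ⟨k, hk, hki, hkj⟩ := exists_mem_ne_ne_of_two_lt_encard hI3 i j
  have huk : ¬ G.Adj u k := fun h => hki (hu.eq_of_adj hk h)
  have hvk : ¬ G.Adj v k := fun h => hkj (hv.eq_of_adj hk h)
  have hik : ¬ G.Adj i k := hI hu.1 hk hki.symm
  constructor
  · intro hadj
    by_contra hij
    have hvi : ¬ G.Adj v i := fun h => hij (hv.eq_of_adj hu.1 h)
    rcases (hu.2 i hu.1).2 rfl with rfl | hui
    · exact hvi hadj.symm
    · have hne : i ≠ v := fun h => hij ((hv.2 i hu.1).1 (Or.inl h.symm))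
      rcases hG.adj_of_P3plusP1 hui.symm hadj (hvi ∘ Adj.symm) hne with h | h | h
      exacts [hik h, huk h, hvk h]
  · rintro rfl
    have hui := (hu.2 i hu.1).2 rfl
    have hvi := (hv.2 i hv.1).2 rfl
    rcases hui with rfl | hui <;> rcases hvi with rfl | hvi
    · exact absurd rfl huv
    · exact hvi.symm
    · exact hui
    · by_contra hnuv
      rcases hG.adj_of_P3plusP1 hui hvi.symm hnuv huv with h | h | h
      exacts [huk h, hik h, hvk h]

end UniquelyDominates

theorem treeIndepNum_le_max_one_ibn {V : Type} [Finite V] {G : SimpleGraph V}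
    (hG : IndFree P3plusP1 G) (hG3 : ¬ G.IndepSetFree 3) : treeIndepNum G ≤ max 1 (ibn G) := by
  obtain ⟨I, hI⟩ := G.maximumIndepSet_exists
  have hI3 : 2 < (I : Set V).encard := by
    obtain ⟨t, ht⟩ : ∃ t, G.IsNIndepSet 3 t := by simpa [IndepSetFree] using hG3
    rw [Set.encard_coe_eq_coe_finsetCard]
    exact_mod_cast ht.card_eq.symm.trans_le (hI.maximum t ht.isIndepSet)
  let U : Set V := {v | ∀ i ∈ I, G.Adj v i}
  have hlabel : ∀ v ∉ U, ∃ i, UniquelyDominates G I i v := fun v hv =>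
    (hG.forall_adj_or_exists_uniquelyDominates (hI.isMaximalIndepSet I) v).resolve_left hv
  choose! r hr using hlabel
  refine (treeIndepNum_le_max_one_setIndepNum r (U := U) fun u hu v huv => ?_).trans
    (max_le_max_left 1 (setIndepNum_commonNeighbors_le_ibn hI))
  by_cases hv : v ∈ U
  · simp [hv, (hG.adj_of_uniquelyDominates hI.isIndepSet hI3 (hr u hu) hv).symm]
  · simp [hv, hG.adj_iff_of_uniquelyDominates hI.isIndepSet hI3 (hr u hu) (hr v hv) huv]

/-- Let `G` be a `(P_3 + P_1)`-free graph with at least one edge. Then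
`tree-α(G) = ibn(G)`, unless `G` is `C_4`-free but contains an induced `C_5`, in which case
`tree-α(G) = 2`. -/
theorem stmt_14 {V : Type} [Finite V] (G : SimpleGraph V) (hfree : IndFree P3plusP1 G)
    (hedge : ∃ u v : V, G.Adj u v) :
    (IndFree (cycleGraph 4) G ∧ Nonempty (cycleGraph 5 ↪g G) → treeIndepNum G = 2) ∧
    (¬ (IndFree (cycleGraph 4) G ∧ Nonempty (cycleGraph 5 ↪g G)) →
      treeIndepNum G = ibn G) := by
  have hlow := ibn_le_treeIndepNum G
  have hibn : 1 ≤ ibn G := by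
    obtain ⟨u, v, huv⟩ := hedge
    exact one_le_ibn_of_adj huv
  constructor
  · rintro ⟨h4, ⟨e⟩⟩
    refine le_antisymm ?_ (two_le_treeIndepNum_of_cycleGraph_five e)
    by_cases hα : G.IndepSetFree 3
    · exact treeIndepNum_le_two_of_indepSetFree_three hα
    · have hlt : ibn G < 2 := not_le.1 (two_le_ibn_iff.not.2 (not_nonempty_iff.2 h4))
      exact (treeIndepNum_le_max_one_ibn hfree hα).trans (max_le one_le_two hlt.le)
  · refine fun hexc => le_antisymm ?_ hlow
    by_cases hα : G.IndepSetFree 3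
    · by_cases h4 : IndFree (cycleGraph 4) G
      · have h5 : IndFree (cycleGraph 5) G := not_nonempty_iff.1 fun h => hexc ⟨h4, h⟩
        exact (treeIndepNum_le_one_of_indepSetFree_three hα h4 h5).trans hibn
      · exact (treeIndepNum_le_two_of_indepSetFree_three hα).trans
          (two_le_ibn_iff.2 (not_isEmpty_iff.1 h4))
    · exact (treeIndepNum_le_max_one_ibn hfree hα).trans (max_le hibn le_rfl)
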